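/- Let A = ℂ[x₁₁, x₁₂, …, x₄₄] be the polynomial ring in the sixteen variables x_{ij} (1 ≤ i,j ≤ 4), and let J be the ideal generated by x₁₁, x₁₂, x₁₃, x₄₁, x₄₂, x₄₃, x₄₄ together with x₂₂ + x₃₃, x₁₄x₂₁ + x₂₃x₃₄ − x₂₄x₃₃, x₁₄x₃₁ + x₂₄x₃₂ + x₃₃x₃₄, x₂₃x₃₂ + x₃₃², x₂₁x₃₂ + x₃₁x₃₃, and x₂₁x₃₃ − x₂₃x₃₁. Then the Krull dimension of the quotient ring A/J is 5. -/

import Mathlib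

open MvPolynomial

/-- A ring map that is surjective up to units does not raise the Krull dimension. -/
theorem ringKrullDim_le_of_surjective_up_to_units {R S : Type*} [CommRing R] [CommRing S]
    (f : R →+* S) (hf : ∀ s, ∃ u r, IsUnit u ∧ u * s = f r) :
    ringKrullDim S ≤ ringKrullDim R := by
  refine Order.krullDim_le_of_strictMono (PrimeSpectrum.comap f) ?_
  refine Monotone.strictMono_of_injective (fun I J h ↦ Ideal.comap_mono h) fun I J h ↦ ?_
  have key : ∀ K L : PrimeSpectrum S, PrimeSpectrum.comap f K = PrimeSpectrum.comap f L →
      K.asIdeal ≤ L.asIdeal := by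
    intro K L h s hs
    obtain ⟨u, r, hu, e⟩ := hf s
    have hr : r ∈ (PrimeSpectrum.comap f K).asIdeal := by
      rw [PrimeSpectrum.comap_asIdeal, Ideal.mem_comap, ← e]
      exact K.asIdeal.mul_mem_left u hs
    rw [h, PrimeSpectrum.comap_asIdeal, Ideal.mem_comap, ← e] at hr
    exact (Ideal.unit_mul_mem_iff_mem _ hu).mp hr
  exact PrimeSpectrum.ext (le_antisymm (key I J h) (key J I h.symm))

theorem ringKrullDim_le_of_isIntegral {R S : Type*} [CommRing R] [CommRing S]
    (f : R →+* S) (hf : f.IsIntegral) : ringKrullDim S ≤ ringKrullDim R := by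
  algebraize [f]
  exact Order.krullDim_le_of_strictMono (PrimeSpectrum.comap f) fun I J h ↦
    Ideal.IsIntegral.comap_lt_comap h

theorem ringKrullDim_le_of_trdeg_le {k D : Type*} [Field k] [CommRing D] [Nontrivial D]
    [Algebra k D] [Algebra.FiniteType k D] {n : ℕ} (h : Algebra.trdeg k D ≤ n) :
    ringKrullDim D ≤ n := by
  obtain ⟨s, g, inj, int⟩ := exists_integral_inj_algHom_of_fg k D
  refine (ringKrullDim_le_of_isIntegral g.toRingHom int).trans ?_
  have hs : AlgebraicIndependent k (fun i : Fin s ↦ g (X i)) := by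
    exact (MvPolynomial.algebraicIndependent_X (Fin s) k).map' (f := g) inj
  simpa using hs.lift_cardinalMk_le_trdeg.trans (Cardinal.lift_le.mpr h)

theorem ringKrullDim_le_of_quotient_prime_le {R : Type*} [CommRing R] {n : WithBot ℕ∞}
    (h : ∀ P : Ideal R, P.IsPrime → ringKrullDim (R ⧸ P) ≤ n) : ringKrullDim R ≤ n := by
  rw [ringKrullDim, Order.krullDim_eq_iSup_coheight]
  refine iSup_le fun P ↦ ?_
  have := h P.asIdeal P.2
  rw [ringKrullDim_quotient] at this
  rw [Order.coheight_eq_krullDim_Ici]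
  exact this

theorem one_le_ringKrullDim {R : Type*} [CommRing R] [IsDomain R] (h : ¬ IsField R) :
    1 ≤ ringKrullDim R := by
  by_contra! h'
  have h'' : ringKrullDim R ≤ 0 := Order.le_of_lt_succ h'
  rw [← Nat.cast_zero, ← Ring.krullDimLE_iff] at h''
  exact h Ring.KrullDimLE.isField_of_isDomain

theorem trdeg_le_card_of_algebraic_generators {k D σ : Type*} [Field k] [CommRing D] [IsDomain D]
    [Algebra k D] (f : MvPolynomial σ k →ₐ[k] D) (hf : Function.Surjective f) (s : Finset D)
    (h : ∀ i, IsAlgebraic (Algebra.adjoin k (s : Set D)) (f (X i))) :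
    Algebra.trdeg k D ≤ s.card := by
  have : Algebra.IsAlgebraic (Algebra.adjoin k (s : Set D)) D := by
    refine ⟨fun x ↦ ?_⟩
    obtain ⟨p, rfl⟩ := hf x
    induction p using MvPolynomial.induction_on with
    | C a =>
      rw [← MvPolynomial.algebraMap_eq, AlgHom.commutes,
        IsScalarTower.algebraMap_apply k (Algebra.adjoin k (s : Set D)) D]
      exact isAlgebraic_algebraMap _
    | add p q hp hq => rw [map_add]; exact hp.add hq
    | mul_X p i hp => rw [map_mul]; exact hp.mul (h i)
  simpa using Algebra.IsAlgebraic.trdeg_le_cardinalMk k (s : Set D)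

theorem not_isField_localization_away_X (k : Type*) [Field k] :
    ¬ IsField (Localization.Away (Polynomial.X : Polynomial k)) := by
  intro h
  let := h.toField
  have hu : IsUnit (Polynomial.evalRingHom (1 : k) Polynomial.X) := by simp
  let g : Localization.Away (Polynomial.X : Polynomial k) →+* k :=
    IsLocalization.Away.lift Polynomial.X hu
  have hg : algebraMap (Polynomial k) (Localization.Away (Polynomial.X : Polynomial k))
      (Polynomial.X - Polynomial.C 1) = 0 := by
    apply g.injective
    rw [IsLocalization.Away.lift_eq]
    simp
  have inj : Function.Injective
      (algebraMap (Polynomial k) (Localization.Away (Polynomial.X : Polynomial k))) :=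
    IsLocalization.injective _ (powers_le_nonZeroDivisors_of_noZeroDivisors Polynomial.X_ne_zero)
  exact Polynomial.X_sub_C_ne_zero (1 : k) (inj (hg.trans (map_zero _).symm))

/-- The ideal of compatible square-zero Rota-Baxter operators of weight 0 on `L₁,₂`. -/
noncomputable def rotaBaxterIdeal : Ideal (MvPolynomial (Fin 4 × Fin 4) ℂ) :=
  Ideal.span {(X (0, 0) : MvPolynomial (Fin 4 × Fin 4) ℂ), X (0, 1), X (0, 2),
    X (3, 0), X (3, 1), X (3, 2), X (3, 3),
    X (1, 1) + X (2, 2),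
    X (0, 3) * X (1, 0) + X (1, 2) * X (2, 3) - X (1, 3) * X (2, 2),
    X (0, 3) * X (2, 0) + X (1, 3) * X (2, 1) + X (2, 2) * X (2, 3),
    X (1, 2) * X (2, 1) + X (2, 2) ^ 2,
    X (1, 0) * X (2, 1) + X (2, 0) * X (2, 2),
    X (1, 0) * X (2, 2) - X (1, 2) * X (2, 0)}

theorem rotaBaxterIdeal_le_ker_iff {D : Type*} [CommRing D] [Algebra ℂ D]
    (f : MvPolynomial (Fin 4 × Fin 4) ℂ →ₐ[ℂ] D) :
    rotaBaxterIdeal ≤ RingHom.ker f ↔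
      f (X (0, 0)) = 0 ∧ f (X (0, 1)) = 0 ∧ f (X (0, 2)) = 0 ∧
      f (X (3, 0)) = 0 ∧ f (X (3, 1)) = 0 ∧ f (X (3, 2)) = 0 ∧ f (X (3, 3)) = 0 ∧
      f (X (1, 1)) + f (X (2, 2)) = 0 ∧
      f (X (0, 3)) * f (X (1, 0)) + f (X (1, 2)) * f (X (2, 3))
        - f (X (1, 3)) * f (X (2, 2)) = 0 ∧
      f (X (0, 3)) * f (X (2, 0)) + f (X (1, 3)) * f (X (2, 1))
        + f (X (2, 2)) * f (X (2, 3)) = 0 ∧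
      f (X (1, 2)) * f (X (2, 1)) + f (X (2, 2)) ^ 2 = 0 ∧
      f (X (1, 0)) * f (X (2, 1)) + f (X (2, 0)) * f (X (2, 2)) = 0 ∧
      f (X (1, 0)) * f (X (2, 2)) - f (X (1, 2)) * f (X (2, 0)) = 0 := by
  simp [rotaBaxterIdeal, Ideal.span_le, Set.insert_subset_iff, RingHom.mem_ker]

theorem trdeg_le_five_of_rotaBaxterIdeal_le_ker {D : Type*} [CommRing D] [IsDomain D] [Algebra ℂ D]
    (f : MvPolynomial (Fin 4 × Fin 4) ℂ →ₐ[ℂ] D) (hf : Function.Surjective f)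
    (hJ : rotaBaxterIdeal ≤ RingHom.ker f) : Algebra.trdeg ℂ D ≤ 5 := by
  classical
  obtain ⟨h00, h01, h02, h30, h31, h32, h33, h11, e₁, e₂, e₃, e₄, e₅⟩ :=
    (rotaBaxterIdeal_le_ker_iff f).mp hJ
  have bound : ∀ v w x y z : Fin 4 × Fin 4,
      (∀ i, IsAlgebraic (Algebra.adjoin ℂ
        ((({f (X v), f (X w), f (X x), f (X y), f (X z)} : Finset D)) : Set D)) (f (X i))) →
      Algebra.trdeg ℂ D ≤ 5 := fun v w x y z h ↦
    (trdeg_le_card_of_algebraic_generators f hf _ h).trans (by exact_mod_cast Finset.card_le_five)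
  have gen : ∀ (s : Finset D) (y : D), y ∈ s →
      IsAlgebraic (Algebra.adjoin ℂ (s : Set D)) y := fun s y hy ↦
    isAlgebraic_algebraMap (A := D)
      (⟨y, Algebra.subset_adjoin hy⟩ : Algebra.adjoin ℂ (s : Set D))
  have h11' : f (X (1, 1)) = -f (X (2, 2)) := by linear_combination h11
  by_cases hb : f (X (1, 2)) = 0
  · have ht : f (X (2, 2)) = 0 := by simpa [hb] using e₃
    by_cases hd : f (X (2, 1)) = 0
    · refine bound (0, 3) (1, 0) (2, 0) (1, 3) (2, 3) ?_
      rintro ⟨i, j⟩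
      fin_cases i <;> fin_cases j <;>
        simp only [Fin.zero_eta, Fin.mk_one, Fin.reduceFinMk, h00, h01, h02, h30, h31, h32, h33,
          h11', ht, hb, hd, neg_zero] <;>
        first | exact isAlgebraic_zero | exact gen _ _ (by simp)
    · have hp : f (X (1, 0)) = 0 := by simpa [hd, ht] using e₄
      refine bound (0, 3) (2, 0) (1, 3) (2, 1) (2, 3) ?_
      rintro ⟨i, j⟩
      fin_cases i <;> fin_cases j <;>
        simp only [Fin.zero_eta, Fin.mk_one, Fin.reduceFinMk, h00, h01, h02, h30, h31, h32, h33,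
          h11', ht, hb, hp, neg_zero] <;>
        first | exact isAlgebraic_zero | exact gen _ _ (by simp)
  · refine bound (0, 3) (1, 0) (1, 2) (1, 3) (2, 2) ?_
    set s : Finset D := {f (X (0, 3)), f (X (1, 0)), f (X (1, 2)), f (X (1, 3)), f (X (2, 2))}
      with hs
    have ga := gen s (f (X (0, 3))) (by simp [hs])
    have gp := gen s (f (X (1, 0))) (by simp [hs])
    have gb := gen s (f (X (1, 2))) (by simp [hs])
    have gc := gen s (f (X (1, 3))) (by simp [hs])
    have gt := gen s (f (X (2, 2))) (by simp [hs])
    have hb' := mem_nonZeroDivisors_of_ne_zero hb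
    have gd : IsAlgebraic (Algebra.adjoin ℂ (s : Set D)) (f (X (2, 1))) := by
      refine .of_mul hb' gb ?_
      rw [eq_neg_of_add_eq_zero_left e₃]
      exact (gt.pow 2).neg
    have gq : IsAlgebraic (Algebra.adjoin ℂ (s : Set D)) (f (X (2, 0))) := by
      refine .of_mul hb' gb ?_
      rw [← sub_eq_zero.mp e₅]
      exact gp.mul gt
    have ge : IsAlgebraic (Algebra.adjoin ℂ (s : Set D)) (f (X (2, 3))) := by
      refine .of_mul hb' gb ?_
      rw [show f (X (1, 2)) * f (X (2, 3)) =
        f (X (1, 3)) * f (X (2, 2)) - f (X (0, 3)) * f (X (1, 0)) by linear_combination e₁]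
      exact (gc.mul gt).sub (ga.mul gp)
    rintro ⟨i, j⟩
    fin_cases i <;> fin_cases j <;>
      simp only [Fin.zero_eta, Fin.mk_one, Fin.reduceFinMk, h00, h01, h02, h30, h31, h32, h33,
        h11'] <;>
      first | exact isAlgebraic_zero | exact gt.neg | assumption

theorem ringKrullDim_quotient_rotaBaxterIdeal_le :
    ringKrullDim (MvPolynomial (Fin 4 × Fin 4) ℂ ⧸ rotaBaxterIdeal) ≤ 5 := by
  refine ringKrullDim_le_of_quotient_prime_le fun P hP ↦ ?_
  refine ringKrullDim_le_of_trdeg_le (k := ℂ) (n := 5) ?_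
  refine trdeg_le_five_of_rotaBaxterIdeal_le_ker
    ((Ideal.Quotient.mkₐ ℂ P).comp (Ideal.Quotient.mkₐ ℂ rotaBaxterIdeal))
    ((Ideal.Quotient.mkₐ_surjective ℂ P).comp
      (Ideal.Quotient.mkₐ_surjective ℂ rotaBaxterIdeal)) fun x hx ↦ ?_
  rw [RingHom.mem_ker, AlgHom.comp_apply, Ideal.Quotient.mkₐ_eq_mk ℂ rotaBaxterIdeal,
    Ideal.Quotient.eq_zero_iff_mem.mpr hx, map_zero]

theorem five_le_ringKrullDim_quotient_rotaBaxterIdeal :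
    5 ≤ ringKrullDim (MvPolynomial (Fin 4 × Fin 4) ℂ ⧸ rotaBaxterIdeal) := by
  let R := Localization.Away (Polynomial.X : Polynomial ℂ)
  have : IsDomain R := IsLocalization.isDomain_localization
    (powers_le_nonZeroDivisors_of_noZeroDivisors Polynomial.X_ne_zero)
  let T := MvPolynomial (Fin 4) R
  have hT : (5 : WithBot ℕ∞) ≤ ringKrullDim T := by
    have h₁ := one_le_ringKrullDim (not_isField_localization_away_X ℂ)
    have h₂ := ringKrullDim_add_natCard_le_ringKrullDim_mvPolynomial (R := R) (Fin 4)
    refine le_trans ?_ h₂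
    refine le_trans ?_ (add_le_add_left h₁ _)
    rw [Nat.card_fin]
    exact le_of_eq (by norm_num)
  refine hT.trans ?_
  let b : T := C (algebraMap (Polynomial ℂ) R Polynomial.X)
  let b' : T := C (IsLocalization.Away.invSelf (Polynomial.X : Polynomial ℂ))
  have hb : b * b' = 1 := by
    rw [← C_mul, IsLocalization.Away.mul_invSelf, C_1]
  let M : Matrix (Fin 4) (Fin 4) T :=
    !![0, 0, 0, X 0;
       X 1, -X 3, b, X 2;
       X 1 * X 3 * b', -(X 3 ^ 2 * b'), X 3, (X 2 * X 3 - X 0 * X 1) * b';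
       0, 0, 0, 0]
  let f : MvPolynomial (Fin 4 × Fin 4) ℂ →ₐ[ℂ] T := aeval fun i ↦ M i.1 i.2
  have hX : ∀ i j, f (X (i, j)) = M i j := fun i j ↦ aeval_X _ _
  have hJ : rotaBaxterIdeal ≤ RingHom.ker f := by
    rw [rotaBaxterIdeal_le_ker_iff]
    simp only [hX]
    refine ⟨rfl, rfl, rfl, rfl, rfl, rfl, rfl, neg_add_cancel _, ?_, ?_, ?_, ?_, ?_⟩
    · change X 0 * X 1 + b * ((X 2 * X 3 - X 0 * X 1) * b') - X 2 * X 3 = 0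
      linear_combination (X 2 * X 3 - X 0 * X 1) * hb
    · change X 0 * (X 1 * X 3 * b') + X 2 * -(X 3 ^ 2 * b')
        + X 3 * ((X 2 * X 3 - X 0 * X 1) * b') = 0
      ring
    · change b * -(X 3 ^ 2 * b') + X 3 ^ 2 = 0
      linear_combination -X 3 ^ 2 * hb
    · change X 1 * -(X 3 ^ 2 * b') + X 1 * X 3 * b' * X 3 = 0
      ring
    · change X 1 * X 3 - b * (X 1 * X 3 * b') = 0
      linear_combination -X 1 * X 3 * hb
  have surj : ∀ t : T, ∃ n r, b ^ n * t = f r := by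
    intro t
    induction t using MvPolynomial.induction_on with
    | C z =>
      obtain ⟨n, p, hp⟩ := IsLocalization.Away.surj (Polynomial.X : Polynomial ℂ) z
      refine ⟨n, Polynomial.aeval (X (1, 2)) p, ?_⟩
      have : ((C : R →+* T).comp (algebraMap (Polynomial ℂ) R)) p =
          f (Polynomial.aeval (X (1, 2)) p) := by
        rw [← Polynomial.aeval_algHom_apply, hX, Polynomial.aeval_def, ← Polynomial.coe_eval₂RingHom]
        refine RingHom.congr_fun (Polynomial.ringHom_ext (fun a ↦ ?_) ?_) p
        · rw [Polynomial.coe_eval₂RingHom, Polynomial.eval₂_C]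
          rfl
        · rw [Polynomial.coe_eval₂RingHom, Polynomial.eval₂_X]
          rfl
      rw [← this, RingHom.comp_apply, ← hp, map_mul, map_pow, mul_comm]
    | add p q hp hq =>
      obtain ⟨m, r, hr⟩ := hp
      obtain ⟨n, u, hu⟩ := hq
      refine ⟨m + n, X (1, 2) ^ n * r + X (1, 2) ^ m * u, ?_⟩
      rw [map_add, map_mul, map_mul, map_pow, map_pow, hX, ← hr, ← hu]
      change _ = b ^ n * _ + b ^ m * _
      ring
    | mul_X p i hp =>
      obtain ⟨m, r, hr⟩ := hp
      have : ∃ v, (X i : T) = f v := by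
        fin_cases i
        exacts [⟨_, (hX 0 3).symm⟩, ⟨_, (hX 1 0).symm⟩, ⟨_, (hX 1 3).symm⟩, ⟨_, (hX 2 2).symm⟩]
      obtain ⟨v, hv⟩ := this
      exact ⟨m, r * v, by rw [map_mul, ← hr, ← hv, mul_assoc]⟩
  refine ringKrullDim_le_of_surjective_up_to_units
    (Ideal.Quotient.lift rotaBaxterIdeal f.toRingHom fun x hx ↦ hJ hx) fun t ↦ ?_
  obtain ⟨n, r, h⟩ := surj t
  exact ⟨b ^ n, Ideal.Quotient.mk _ r, (IsUnit.of_mul_eq_one _ hb).pow n, h⟩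

/-- In `A = ℂ[x₁₁, …, x₄₄]` (variable `xᵢⱼ` is `X (i-1, j-1)`), the
quotient of `A` by the vanishing ideal `J` of the variety of compatible square-zero
Rota-Baxter operators of weight 0 on `L₁,₂` has Krull dimension 5. -/
theorem krull_dimension_five :
    ringKrullDim (MvPolynomial (Fin 4 × Fin 4) ℂ ⧸
      (Ideal.span {(X (0, 0) : MvPolynomial (Fin 4 × Fin 4) ℂ), X (0, 1), X (0, 2),
        X (3, 0), X (3, 1), X (3, 2), X (3, 3),
        X (1, 1) + X (2, 2),
        X (0, 3) * X (1, 0) + X (1, 2) * X (2, 3) - X (1, 3) * X (2, 2),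
        X (0, 3) * X (2, 0) + X (1, 3) * X (2, 1) + X (2, 2) * X (2, 3),
        X (1, 2) * X (2, 1) + X (2, 2) ^ 2,
        X (1, 0) * X (2, 1) + X (2, 0) * X (2, 2),
        X (1, 0) * X (2, 2) - X (1, 2) * X (2, 0)})) = 5 := by
  exact le_antisymm ringKrullDim_quotient_rotaBaxterIdeal_le
    five_le_ringKrullDim_quotient_rotaBaxterIdeal
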